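/- There is a class C of distributions on ℕ×ℕ (namely C_g for a suitable superlinear g) that is obliviously additively 3-robustly learnable, yet for every α ≥ 1, C is not adaptively additively α-robustly learnable. -/

import Mathlib

open scoped ENNReal NNReal

/-- Total variation distance between two discrete distributions. -/
noncomputable def tv {X : Type*} (p q : PMF X) : ℝ :=
  (∑' x, |(p x).toReal - (q x).toReal|) / 2

/-- The distribution of an i.i.d. sample of size `m` from `p`, viewed as a multiset. -/
noncomputable def iid {X : Type*} (p : PMF X) : ℕ → PMF (Multiset X)
  | 0 => PMF.pure 0
  | n + 1 => (iid p n).bind fun s => p.map fun x => x ::ₘ s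

/-- `|Q|^m` : first draw `q ∼ Q`, then an i.i.d. sample `S ∼ q^m`. -/
noncomputable def metaSample {X : Type*} (Q : PMF (PMF X)) (m : ℕ) : PMF (Multiset X) :=
  Q.bind fun q => iid q m

/-- An adaptive adversary: a randomized map from samples (finite multisets) to samples. -/
abbrev Adversary (X : Type*) := Multiset X → PMF (Multiset X)

/-- `V(P)`: the distribution of `V S` for `S ∼ P` (including internal randomness). -/
noncomputable def advPush {X : Type*} (V : Adversary X) (P : PMF (Multiset X)) :
    PMF (Multiset X) := P.bind V

/-- An additive adversary only adds points: `S ⊆ V(S)` almost surely. -/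
def IsAdditive {X : Type*} (V : Adversary X) : Prop :=
  ∀ S T, T ∈ (V S).support → S ≤ T

/-- A subtractive adversary only removes points: `V(S) ⊆ S` almost surely. -/
def IsSubtractive {X : Type*} (V : Adversary X) : Prop :=
  ∀ S T, T ∈ (V S).support → T ≤ S

/-- Fixed constant budget `η`: `|V(S)|` depends only on `|S|` (via `c`), and for every `m`,
`η m − 1 < m·budget(V,m) ≤ η m` where `m·budget(V,m) = ||V(S)| − |S||`. -/
def FixedBudget {X : Type*} (V : Adversary X) (η : ℝ) : Prop :=
  ∃ c : ℕ → ℕ, (∀ S T, T ∈ (V S).support → Multiset.card T = c (Multiset.card S)) ∧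
    ∀ m : ℕ, η * m - 1 < |(c m : ℝ) - m| ∧ |(c m : ℝ) - m| ≤ η * m

/-- Fixed constant budget `η` for an additive adversary (`m·budget(V,m) = |V(S)| − |S|`). -/
def FixedBudgetAdd {X : Type*} (V : Adversary X) (η : ℝ) : Prop :=
  ∃ c : ℕ → ℕ, (∀ S T, T ∈ (V S).support → Multiset.card T = c (Multiset.card S)) ∧
    ∀ m : ℕ, η * m - 1 < (c m : ℝ) - m ∧ (c m : ℝ) - m ≤ η * m

/-- Fixed constant budget `η` for a subtractive adversary (`m·budget(V,m) = |S| − |V(S)|`). -/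
def FixedBudgetSub {X : Type*} (V : Adversary X) (η : ℝ) : Prop :=
  ∃ c : ℕ → ℕ, (∀ S T, T ∈ (V S).support → Multiset.card T = c (Multiset.card S)) ∧
    ∀ m : ℕ, η * m - 1 < (m : ℝ) - c m ∧ (m : ℝ) - c m ≤ η * m

/-- Probability of an event under a discrete distribution. -/
noncomputable def probEvent {β : Type*} (P : PMF β) (E : Set β) : ℝ≥0∞ :=
  P.toOuterMeasure E

/-- `A` with sample complexity `mc` learns the class `C` against adversary `V`,
up to error `bound + ε` with confidence `1 − δ` once `m ≥ mc ε δ`. -/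
def RobustLearnerFor {X : Type*} (C : Set (PMF X)) (A : Multiset X → PMF X)
    (mc : ℝ → ℝ → ℕ) (V : Adversary X) (bound : ℝ) : Prop :=
  ∀ p ∈ C, ∀ ε δ : ℝ, 0 < ε → ε < 1 → 0 < δ → δ < 1 →
    ∀ m : ℕ, mc ε δ ≤ m →
      1 - ENNReal.ofReal δ ≤
        probEvent ((iid p m).bind V) {T | tv (A T) p ≤ bound + ε}

/-- `C` is adaptively α-robustly learnable w.r.t. the single adversary `V` with budget `η`. -/
def RobustlyLearnableWrt {X : Type*} (C : Set (PMF X)) (α : ℝ)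
    (V : Adversary X) (η : ℝ) : Prop :=
  ∃ A mc, RobustLearnerFor C A mc V (α * η)

/-- `V` (with budget `η`) is a universal α-adversary for `C`. -/
def UniversalAdversary {X : Type*} (C : Set (PMF X)) (α : ℝ)
    (V : Adversary X) (η : ℝ) : Prop :=
  ¬ RobustlyLearnableWrt C α V η

/-- `C` is adaptively α-robustly learnable w.r.t. a class `𝒱` of adversaries
(each given with its budget). -/
def RobustlyLearnableWrtClass {X : Type*} (C : Set (PMF X)) (α : ℝ)
    (𝒱 : Set (Adversary X × ℝ)) : Prop :=
  ∃ A mc, ∀ Vη ∈ 𝒱, RobustLearnerFor C A mc Vη.1 (α * Vη.2)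

/-- `C` is adaptively additively α-robustly learnable: one learner works simultaneously
against all additive adaptive adversaries with fixed constant budgets. -/
def AdditivelyRobustlyLearnable {X : Type*} (C : Set (PMF X)) (α : ℝ) : Prop :=
  ∃ A mc, ∀ V : Adversary X, ∀ η : ℝ, 0 < η → η < 1 →
    IsAdditive V → FixedBudgetAdd V η → RobustLearnerFor C A mc V (α * η)

/-- `C` is adaptively subtractively α-robustly learnable. -/
def SubtractivelyRobustlyLearnable {X : Type*} (C : Set (PMF X)) (α : ℝ) : Prop :=
  ∃ A mc, ∀ V : Adversary X, ∀ η : ℝ, 0 < η → η < 1 →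
    IsSubtractive V → FixedBudgetSub V η → RobustLearnerFor C A mc V (α * η)

/-- The pair `(V1, V2)` successfully `(γ,ζ)`-confuses `C`-generated samples of size `m`. -/
def ConfusesPair {X : Type*} (C : Set (PMF X)) (V1 V2 : Adversary X)
    (γ ζ : ℝ) (m : ℕ) : Prop :=
  ∃ p ∈ C, ∃ Q : PMF (PMF X), Q.support ⊆ C ∧
    (∀ q ∈ Q.support, γ < tv p q) ∧
    tv (advPush V1 (metaSample Q m)) (advPush V2 (iid p m)) < ζ

/-- A single adversary `V` successfully `(γ,ζ)`-confuses `C`-generated samples of size `m`. -/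
def Confuses {X : Type*} (C : Set (PMF X)) (V : Adversary X) (γ ζ : ℝ) (m : ℕ) : Prop :=
  ConfusesPair C V V γ ζ m

/-- `p` is the distribution `p_{i,j,k} = (1 − 1/j)·δ_{(0,0)} + (1/j − 1/k)·U_{B_i×{2j+1}}
 + (1/k)·δ_{(i,2j+2)}` on `ℕ × ℕ`. -/
def IsPijk (B : ℕ → Finset ℕ) (i j k : ℕ) (p : PMF (ℕ × ℕ)) : Prop :=
  ∀ x : ℕ × ℕ,
    p x = (1 - ((j : ℝ≥0∞))⁻¹) * (if x = (0, 0) then 1 else 0)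
      + (((j : ℝ≥0∞))⁻¹ - ((k : ℝ≥0∞))⁻¹) *
          (if x.1 ∈ B i ∧ x.2 = 2 * j + 1 then (((B i).card : ℝ≥0∞))⁻¹ else 0)
      + ((k : ℝ≥0∞))⁻¹ * (if x = (i, 2 * j + 2) then 1 else 0)

/-- The class `C_g = {p_{i,j,g(j)} : i, j ∈ ℕ}` (for the meaningful parameters). -/
def Cg (B : ℕ → Finset ℕ) (g : ℕ → ℕ) : Set (PMF (ℕ × ℕ)) :=
  {p | ∃ i j : ℕ, 1 ≤ j ∧ j < g j ∧ (B i).Nonempty ∧ IsPijk B i j (g j) p}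

/-- `g` is superlinear: `g(n)/n → ∞`. -/
def Superlinear (g : ℕ → ℕ) : Prop :=
  Filter.Tendsto (fun n => (g n : ℝ) / n) Filter.atTop Filter.atTop

/-- `C` is obliviously additively α-robustly learnable: a learner succeeds given i.i.d.
samples from any additive (Huber) contamination `p' = (1−η)p + ηr` of any `p ∈ C`. -/
def ObliviouslyAdditivelyRobustlyLearnable {X : Type*} (C : Set (PMF X)) (α : ℝ) : Prop :=
  ∃ (A : Multiset X → PMF X) (mc : ℝ → ℝ → ℕ),
    ∀ p ∈ C, ∀ η : ℝ, 0 ≤ η → η < 1 → ∀ r p' : PMF X,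
      (∀ x, p' x = ENNReal.ofReal (1 - η) * p x + ENNReal.ofReal η * r x) →
      ∀ ε δ : ℝ, 0 < ε → ε < 1 → 0 < δ → δ < 1 → ∀ m : ℕ, mc ε δ ≤ m →
        1 - ENNReal.ofReal δ ≤ probEvent (iid p' m) {S | tv (A S) p ≤ α * η + ε}

/-!
The label `(i, 2j + 2)` reveals everything. A learner can try the hypotheses named by the points of
its sample and choose among them by comparison with the empirical measure on their Scheffé sets.
An oblivious adversary can neither remove the labels nor tie its points to the sample, so the
frequency of such a set, which depends on two sample points only, is still close to its probability
once the two points are left out. Hypotheses with large `j` are close to the point mass at the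
origin, so only finitely many label weights matter and the sample complexity is uniform.

An adaptive adversary exploits that the labels carry mass `1 / g j`, which is negligible compared to
the mass `1 / j` of the set `B i`. For every label that occurs it adds a label of the set agreeing
with `B i` on the elements that occur in the sample and disjoint from it elsewhere. When `B i` is
much larger than the sample, the two hypotheses are far apart, but equally compatible with what the
learner sees.
-/

section Expectation

variable {β γ : Type*}

/-- The expectation of a `[0, ∞]`-valued function under a discrete distribution. -/
noncomputable def expect (P : PMF β) (F : β → ℝ≥0∞) : ℝ≥0∞ := ∑' b, P b * F b

lemma expect_mono (P : PMF β) {F G : β → ℝ≥0∞} (h : ∀ b, F b ≤ G b) : expect P F ≤ expect P G :=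
  ENNReal.tsum_le_tsum fun b => by gcongr; exact h b

lemma expect_const (P : PMF β) (c : ℝ≥0∞) : expect P (fun _ => c) = c := by
  rw [expect, ENNReal.tsum_mul_right, P.tsum_coe, one_mul]

lemma expect_add (P : PMF β) (F G : β → ℝ≥0∞) :
    expect P (fun b => F b + G b) = expect P F + expect P G := by
  simp only [expect, mul_add, ENNReal.tsum_add]

lemma expect_const_mul (P : PMF β) (c : ℝ≥0∞) (F : β → ℝ≥0∞) :
    expect P (fun b => c * F b) = c * expect P F := by
  simp only [expect, mul_left_comm _ c, ENNReal.tsum_mul_left]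

lemma expect_comm (P : PMF β) (Q : PMF γ) (F : β → γ → ℝ≥0∞) :
    expect P (fun b => expect Q (F b)) = expect Q fun c => expect P fun b => F b c := by
  simp only [expect, ← ENNReal.tsum_mul_left]
  rw [ENNReal.tsum_comm]
  simp only [mul_left_comm]

lemma expect_bind (P : PMF β) (K : β → PMF γ) (F : γ → ℝ≥0∞) :
    expect (P.bind K) F = expect P fun b => expect (K b) F := by
  simp only [expect, PMF.bind_apply, ← ENNReal.tsum_mul_left, ← ENNReal.tsum_mul_right]
  rw [ENNReal.tsum_comm]
  simp only [mul_assoc]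

lemma expect_pure (b : β) (F : β → ℝ≥0∞) : expect (PMF.pure b) F = F b := by
  rw [expect, tsum_eq_single b]
  · rw [PMF.pure_apply_self, one_mul]
  · intro c hc
    rw [PMF.pure_apply_of_ne _ _ hc, zero_mul]

lemma expect_map (P : PMF β) (φ : β → γ) (F : γ → ℝ≥0∞) :
    expect (P.map φ) F = expect P fun b => F (φ b) := by
  rw [← PMF.bind_pure_comp, expect_bind]
  simp only [Function.comp_apply, expect_pure]

lemma probEvent_eq_expect (P : PMF β) (E : Set β) : probEvent P E = expect P (E.indicator 1) := by
  rw [probEvent, PMF.toOuterMeasure_apply, expect]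
  refine tsum_congr fun b => ?_
  by_cases hb : b ∈ E <;> simp [hb]

lemma probEvent_mono (P : PMF β) {E E' : Set β} (h : ∀ b ∈ P.support, b ∈ E → b ∈ E') :
    probEvent P E ≤ probEvent P E' :=
  P.toOuterMeasure_mono fun b hb => h b hb.2 hb.1

lemma probEvent_union_le (P : PMF β) (E E' : Set β) :
    probEvent P (E ∪ E') ≤ probEvent P E + probEvent P E' :=
  MeasureTheory.measure_union_le E E'

lemma probEvent_univ (P : PMF β) : probEvent P Set.univ = 1 :=
  (P.toOuterMeasure_apply_eq_one_iff _).2 (Set.subset_univ _)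

lemma probEvent_le_one (P : PMF β) (E : Set β) : probEvent P E ≤ 1 :=
  (probEvent_mono P fun b _ _ => Set.mem_univ b).trans_eq (probEvent_univ P)

lemma probEvent_add_compl (P : PMF β) (E : Set β) : probEvent P E + probEvent P Eᶜ = 1 := by
  rw [probEvent_eq_expect, probEvent_eq_expect, ← expect_add, ← expect_const P 1]
  refine congrArg _ (funext fun b => ?_)
  by_cases hb : b ∈ E <;> simp [hb]

lemma probEvent_compl (P : PMF β) (E : Set β) : probEvent P Eᶜ = 1 - probEvent P E :=
  ENNReal.eq_sub_of_add_eq ((probEvent_le_one P E).trans_lt ENNReal.one_lt_top).ne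
    ((add_comm _ _).trans (probEvent_add_compl P E))

lemma one_sub_le_probEvent {P : PMF β} {E E' : Set β} {δ : ℝ≥0∞} (hE : Eᶜ ⊆ E')
    (hδ : probEvent P E' ≤ δ) : 1 - δ ≤ probEvent P E := by
  rw [tsub_le_iff_right, ← probEvent_add_compl P E]
  gcongr
  exact (probEvent_mono P fun _ _ hb => hE hb).trans hδ

lemma probEvent_singleton (P : PMF β) (b : β) : probEvent P {b} = P b :=
  P.toOuterMeasure_apply_singleton b

lemma probEvent_map (P : PMF β) (φ : β → γ) (E : Set γ) :
    probEvent (P.map φ) E = probEvent P {b | φ b ∈ E} :=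
  PMF.toOuterMeasure_map_apply φ P E

lemma mul_probEvent_le_expect (P : PMF β) (F : β → ℝ≥0∞) (c : ℝ≥0∞) :
    c * probEvent P {b | c ≤ F b} ≤ expect P F := by
  rw [probEvent_eq_expect, ← expect_const_mul]
  refine expect_mono P fun b => ?_
  by_cases hb : c ≤ F b <;> simp [hb]

end Expectation

section Samples

variable {X Y : Type*}

lemma expect_iid_zero (p : PMF X) (F : Multiset X → ℝ≥0∞) : expect (iid p 0) F = F 0 :=
  expect_pure 0 F

lemma expect_iid_succ (p : PMF X) (m : ℕ) (F : Multiset X → ℝ≥0∞) :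
    expect (iid p (m + 1)) F = expect p fun x => expect (iid p m) fun S => F (x ::ₘ S) := by
  rw [iid, expect_bind, expect_comm p]
  simp only [expect_map]

lemma probEvent_iid_succ (p : PMF X) (m : ℕ) (E : Set (Multiset X)) :
    probEvent (iid p (m + 1)) E = expect p fun x => probEvent (iid p m) {S | x ::ₘ S ∈ E} := by
  simp only [probEvent_eq_expect, expect_iid_succ]
  rfl

lemma card_of_mem_support_iid {p : PMF X} {m : ℕ} {S : Multiset X} (hS : S ∈ (iid p m).support) :
    Multiset.card S = m := by
  induction m generalizing S with
  | zero =>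
    obtain rfl : S = 0 := by simpa [iid] using hS
    rfl
  | succ m ih =>
    obtain ⟨T, hT, x, -, rfl⟩ : ∃ T ∈ (iid p m).support, ∃ x ∈ p.support, x ::ₘ T = S := by
      simpa [iid] using hS
    rw [Multiset.card_cons, ih hT]

lemma iid_map (p : PMF X) (φ : X → Y) (m : ℕ) :
    iid (p.map φ) m = (iid p m).map (Multiset.map φ) := by
  induction m with
  | zero => simp [iid, PMF.pure_map]
  | succ m ih =>
    simp only [iid, ih, PMF.bind_map, PMF.map_bind, PMF.map_comp]
    refine congrArg _ (funext fun S => ?_)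
    simp [Function.comp_def]

lemma expect_iid_prod (p : PMF X) (φ : X → ℝ≥0∞) (m : ℕ) :
    expect (iid p m) (fun S => (S.map φ).prod) = expect p φ ^ m := by
  induction m with
  | zero => simp [expect_iid_zero]
  | succ m ih =>
    simp only [expect_iid_succ, Multiset.map_cons, Multiset.prod_cons, expect_const_mul, ih]
    simp only [mul_comm _ (expect p φ ^ m), expect_const_mul, pow_succ]

lemma expect_iid_count [DecidableEq X] (p : PMF X) (x : X) (m : ℕ) :
    expect (iid p m) (fun S => (S.count x : ℝ≥0∞)) = m * p x := by
  have hx : expect p (fun y => if x = y then 1 else 0) = p x := by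
    rw [expect, tsum_eq_single x] <;> simp +contextual [eq_comm]
  induction m with
  | zero => simp [expect_iid_zero]
  | succ m ih =>
    simp only [expect_iid_succ, Multiset.count_cons, Nat.cast_add, Nat.cast_ite, Nat.cast_one,
      Nat.cast_zero, expect_add, expect_const, ih, hx]
    ring

lemma mul_probEvent_mul_le_count_le_one [DecidableEq X] {p : PMF X} {x : X}
    (hx : p x ≠ 0) {m : ℕ} (hm : 0 < m) (c : ℝ≥0∞) :
    c * probEvent (iid p m) {S | c * (m * p x) ≤ S.count x} ≤ 1 := by
  have hmx : m * p x ≠ 0 := mul_ne_zero (by exact_mod_cast hm.ne') hx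
  have hmx' : m * p x ≠ ⊤ := ENNReal.mul_ne_top (ENNReal.natCast_ne_top m) (p.apply_ne_top x)
  refine (ENNReal.mul_le_mul_iff_right hmx hmx').1 ?_
  calc m * p x * (c * probEvent (iid p m) {S | c * (m * p x) ≤ S.count x})
      = c * (m * p x) * probEvent (iid p m) {S | c * (m * p x) ≤ S.count x} := by ring
    _ ≤ expect (iid p m) fun S => (S.count x : ℝ≥0∞) := mul_probEvent_le_expect _ _ _
    _ = m * p x * 1 := by rw [expect_iid_count, mul_one]

lemma probEvent_iid_forall_mem (p : PMF X) (W : Set X) (m : ℕ) :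
    probEvent (iid p m) {S | ∀ y ∈ S, y ∈ W} = probEvent p W ^ m := by
  rw [probEvent_eq_expect p, ← expect_iid_prod, probEvent_eq_expect]
  refine congrArg _ (funext fun S => ?_)
  induction S using Multiset.induction_on with
  | empty => simp
  | cons x S ih =>
    rw [Multiset.map_cons, Multiset.prod_cons, ← ih]
    have hcons : x ::ₘ S ∈ {S | ∀ y ∈ S, y ∈ W} ↔ x ∈ W ∧ S ∈ {S | ∀ y ∈ S, y ∈ W} :=
      Multiset.forall_mem_cons
    by_cases hx : x ∈ W <;> by_cases hS : S ∈ {S | ∀ y ∈ S, y ∈ W} <;>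
      simp only [Set.indicator, hcons, hx, hS, and_self, and_true, and_false, if_true,
        if_false, Pi.one_apply, one_mul, zero_mul, mul_zero]

lemma probEvent_iid_exists_erase_le (p : PMF X) (m : ℕ) (E : X → Set (Multiset X)) :
    probEvent (iid p (m + 1)) {S | ∃ x T, S = x ::ₘ T ∧ T ∈ E x}
      ≤ (m + 1) * expect p fun x => probEvent (iid p m) (E x) := by
  induction m generalizing E with
  | zero =>
    rw [probEvent_iid_succ, Nat.cast_zero, zero_add, one_mul]
    refine expect_mono p fun y => probEvent_mono _ fun S hS => ?_
    obtain rfl : S = 0 := by simpa using card_of_mem_support_iid hS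
    rintro ⟨x, T, hST, hT⟩
    obtain ⟨rfl, rfl⟩ : y = x ∧ T = 0 := by
      simpa [Multiset.cons_eq_cons] using hST
    exact hT
  | succ m ih =>
    have hsplit : ∀ y, {S | y ::ₘ S ∈ {S | ∃ x T, S = x ::ₘ T ∧ T ∈ E x}}
        ⊆ E y ∪ {S | ∃ x T, S = x ::ₘ T ∧ T ∈ {T | y ::ₘ T ∈ E x}} := by
      rintro y S ⟨x, T, hST, hT⟩
      rcases Multiset.cons_eq_cons.1 hST with ⟨rfl, rfl⟩ | ⟨-, T', rfl, rfl⟩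
      · exact Or.inl hT
      · exact Or.inr ⟨x, T', rfl, hT⟩
    calc probEvent (iid p (m + 1 + 1)) {S | ∃ x T, S = x ::ₘ T ∧ T ∈ E x}
        ≤ expect p fun y => probEvent (iid p (m + 1)) (E y)
            + (m + 1) * expect p fun x => probEvent (iid p m) {T | y ::ₘ T ∈ E x} := by
          rw [probEvent_iid_succ]
          refine expect_mono p fun y => ?_
          refine (probEvent_mono _ fun S _ hS => hsplit y hS).trans
            ((probEvent_union_le _ _ _).trans ?_)
          gcongr
          exact ih _
      _ = (↑(m + 1) + 1) * expect p fun x => probEvent (iid p (m + 1)) (E x) := by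
          rw [expect_add, expect_const_mul, expect_comm]
          simp only [← probEvent_iid_succ]
          push_cast
          ring

end Samples

section TotalVariation

variable {X : Type*}

/-- The probability of an event as a real number. -/
noncomputable def prob (p : PMF X) (W : Set X) : ℝ := (probEvent p W).toReal

lemma prob_nonneg (p : PMF X) (W : Set X) : 0 ≤ prob p W := ENNReal.toReal_nonneg

lemma prob_le_one (p : PMF X) (W : Set X) : prob p W ≤ 1 :=
  ENNReal.toReal_le_of_le_ofReal zero_le_one (by simpa using probEvent_le_one p W)

lemma hasSum_prob (p : PMF X) (W : Set X) :
    HasSum (W.indicator fun x => (p x).toReal) (prob p W) := by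
  have hW : W.indicator (fun x => (p x).toReal) = fun x => (W.indicator p x).toReal :=
    funext fun x => by by_cases hx : x ∈ W <;> simp [hx]
  have hsum : ∑' x, W.indicator p x ≠ ∞ := by
    rw [← p.toOuterMeasure_apply]
    exact ((probEvent_le_one p W).trans_lt ENNReal.one_lt_top).ne
  rw [hW, prob, probEvent, p.toOuterMeasure_apply,
    ENNReal.tsum_toReal_eq (ENNReal.ne_top_of_tsum_ne_top hsum)]
  exact ENNReal.hasSum_toReal hsum

lemma prob_univ (p : PMF X) : prob p Set.univ = 1 := by
  rw [prob, probEvent_univ, ENNReal.toReal_one]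

lemma hasSum_toReal_pmf (p : PMF X) : HasSum (fun x => (p x).toReal) 1 := by
  simpa [prob_univ] using hasSum_prob p Set.univ

lemma summable_tv (p q : PMF X) : Summable fun x => |(p x).toReal - (q x).toReal| :=
  ((hasSum_toReal_pmf p).summable.sub (hasSum_toReal_pmf q).summable).abs

lemma tv_comm (p q : PMF X) : tv p q = tv q p := by
  simp only [tv, abs_sub_comm]

lemma tv_triangle (p q r : PMF X) : tv p r ≤ tv p q + tv q r := by
  unfold tv
  rw [← add_div, ← (summable_tv p q).tsum_add (summable_tv q r)]
  gcongr
  · exact summable_tv p r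
  · exact (summable_tv p q).add (summable_tv q r)
  · exact abs_sub_le _ _ _

/-- The summand is `p x - q x` on `W` and `q x - p x` off `W`. -/
lemma hasSum_signed_sub (p q : PMF X) (W : Set X) :
    HasSum (fun x => 2 * (W.indicator (fun x => (p x).toReal) x
      - W.indicator (fun x => (q x).toReal) x) - ((p x).toReal - (q x).toReal))
      (2 * (prob p W - prob q W)) := by
  simpa using (((hasSum_prob p W).sub (hasSum_prob q W)).mul_left 2).sub
    ((hasSum_toReal_pmf p).sub (hasSum_toReal_pmf q))

lemma prob_sub_le_tv (p q : PMF X) (W : Set X) : prob p W - prob q W ≤ tv p q := by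
  have h := hasSum_le (fun x => ?_) (hasSum_signed_sub p q W) (summable_tv p q).hasSum
  · unfold tv; linarith
  · by_cases hx : x ∈ W
    · simp only [hx, Set.indicator_of_mem]
      linarith [le_abs_self ((p x).toReal - (q x).toReal)]
    · simp only [hx, not_false_eq_true, Set.indicator_of_notMem]
      linarith [neg_abs_le ((p x).toReal - (q x).toReal)]

lemma abs_prob_sub_le_tv (p q : PMF X) (W : Set X) : |prob p W - prob q W| ≤ tv p q :=
  abs_sub_le_iff.2 ⟨prob_sub_le_tv p q W, tv_comm q p ▸ prob_sub_le_tv q p W⟩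

/-- The Scheffé set of two distributions, where their difference is maximal. -/
def scheffe (p q : PMF X) : Set X := {x | q x ≤ p x}

lemma tv_eq_prob_scheffe_sub (p q : PMF X) :
    tv p q = prob p (scheffe p q) - prob q (scheffe p q) := by
  have habs : ∀ x, |(p x).toReal - (q x).toReal| =
      2 * ((scheffe p q).indicator (fun x => (p x).toReal) x
        - (scheffe p q).indicator (fun x => (q x).toReal) x) - ((p x).toReal - (q x).toReal) := by
    intro x
    by_cases hx : x ∈ scheffe p q
    · have := ENNReal.toReal_mono (p.apply_ne_top x) hx
      simp only [hx, Set.indicator_of_mem]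
      rw [abs_of_nonneg (by linarith)]; ring
    · have := ENNReal.toReal_mono (q.apply_ne_top x) (not_le.1 hx).le
      simp only [hx, not_false_eq_true, Set.indicator_of_notMem]
      rw [abs_of_nonpos (by linarith)]; ring
  simp only [tv, habs, (hasSum_signed_sub p q (scheffe p q)).tsum_eq]
  ring

lemma tv_le_one (p q : PMF X) : tv p q ≤ 1 := by
  rw [tv_eq_prob_scheffe_sub]
  linarith [prob_le_one p (scheffe p q), prob_nonneg q (scheffe p q)]

lemma tv_nonneg (p q : PMF X) : 0 ≤ tv p q := (abs_nonneg _).trans (abs_prob_sub_le_tv p q ∅)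

lemma tv_self (p : PMF X) : tv p p = 0 := by simp [tv]

lemma prob_mono (p : PMF X) {W W' : Set X} (h : W ⊆ W') : prob p W ≤ prob p W' :=
  ENNReal.toReal_mono ((probEvent_le_one p W').trans_lt ENNReal.one_lt_top).ne
    (probEvent_mono p fun _ _ hx => h hx)

lemma prob_singleton (p : PMF X) (x : X) : prob p {x} = (p x).toReal := by
  rw [prob, probEvent_singleton]

lemma tv_pure_le (x : X) (p : PMF X) : tv (PMF.pure x) p ≤ 1 - (p x).toReal := by
  have hx : {x} ⊆ scheffe (PMF.pure x) p :=
    Set.singleton_subset_iff.2 ((p.coe_le_one x).trans_eq (PMF.pure_apply_self x).symm)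
  rw [tv_eq_prob_scheffe_sub, ← prob_singleton]
  exact sub_le_sub (prob_le_one _ _) (prob_mono p hx)

lemma tv_le_of_eq_mixture {p p' r : PMF X} {η : ℝ} (h0 : 0 ≤ η) (h1 : η ≤ 1)
    (h : ∀ x, p' x = ENNReal.ofReal (1 - η) * p x + ENNReal.ofReal η * r x) :
    tv p p' ≤ η := by
  have habs : ∀ x, |(p x).toReal - (p' x).toReal| = η * |(p x).toReal - (r x).toReal| := by
    intro x
    have hp' : (p' x).toReal = (1 - η) * (p x).toReal + η * (r x).toReal := by
      rw [h, ENNReal.toReal_add (ENNReal.mul_ne_top ENNReal.ofReal_ne_top (p.apply_ne_top x))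
        (ENNReal.mul_ne_top ENNReal.ofReal_ne_top (r.apply_ne_top x)), ENNReal.toReal_mul,
        ENNReal.toReal_mul, ENNReal.toReal_ofReal h0, ENNReal.toReal_ofReal (sub_nonneg.2 h1)]
    rw [hp', ← abs_of_nonneg h0, ← abs_mul, abs_of_nonneg h0]
    ring_nf
  calc tv p p' = η * tv p r := by simp only [tv, habs, tsum_mul_left, mul_div_assoc]
    _ ≤ η := mul_le_of_le_one_right h0 (tv_le_one p r)

end TotalVariation

section Concentration

open ProbabilityTheory MeasureTheory Filter Topology

variable {X : Type*}

lemma expect_exp_indicator_sub_prob_le (p : PMF X) (W : Set X) (l : ℝ) :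
    expect p (fun x => ENNReal.ofReal (Real.exp (l * (W.indicator 1 x - prob p W))))
      ≤ ENNReal.ofReal (Real.exp (l ^ 2 / 8)) := by
  let _ : MeasurableSpace X := ⊤
  have _ : MeasurableSingletonClass X := ⟨fun _ => MeasurableSpace.measurableSet_top⟩
  have hmem : ∀ x, W.indicator 1 x ∈ Set.Icc (0 : ℝ) 1 := fun x =>
    ⟨Set.indicator_nonneg (fun _ _ => zero_le_one) x,
      Set.indicator_le_self' (fun _ _ => zero_le_one) x⟩
  have hmean : p.toMeasure[W.indicator (1 : X → ℝ)] = prob p W := by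
    rw [integral_indicator_one MeasurableSpace.measurableSet_top, measureReal_def,
      p.toMeasure_apply_eq_toOuterMeasure, prob, probEvent]
  have hoeffding : HasSubgaussianMGF (fun x => W.indicator 1 x - prob p W)
      ((‖(1 : ℝ) - 0‖₊ / 2) ^ 2) p.toMeasure :=
    hmean ▸ hasSubgaussianMGF_of_mem_Icc measurable_from_top.aemeasurable (ae_of_all _ hmem)
  have hsum : Summable fun x =>
      (p x).toReal * Real.exp (l * (W.indicator 1 x - prob p W)) := by
    refine ((hasSum_toReal_pmf p).summable.mul_right (Real.exp |l|)).of_nonneg_of_le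
      (fun x => by positivity) fun x => ?_
    gcongr
    refine (le_abs_self _).trans ?_
    rw [abs_mul]
    refine mul_le_of_le_one_right (abs_nonneg l) (abs_le.2 ?_)
    constructor <;> linarith [(hmem x).1, (hmem x).2, prob_nonneg p W, prob_le_one p W]
  calc expect p (fun x => ENNReal.ofReal (Real.exp (l * (W.indicator 1 x - prob p W))))
      = ENNReal.ofReal (mgf (fun x => W.indicator 1 x - prob p W) p.toMeasure l) := by
        rw [mgf, PMF.integral_eq_tsum _ _ (hoeffding.integrable_exp_mul l)]
        simp only [smul_eq_mul]
        rw [ENNReal.ofReal_tsum_of_nonneg (fun x => by positivity) hsum]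
        simp only [expect, ENNReal.ofReal_mul ENNReal.toReal_nonneg,
          ENNReal.ofReal_toReal (p.apply_ne_top _)]
    _ ≤ ENNReal.ofReal (Real.exp (l ^ 2 / 8)) := by
        refine ENNReal.ofReal_le_ofReal ((hoeffding.mgf_le l).trans_eq ?_)
        norm_num
        ring

/-- The number of points of a sample lying in `W`, counted with multiplicity. -/
noncomputable def hits (W : Set X) (S : Multiset X) : ℝ := (S.map (W.indicator 1)).sum

/-- The fraction of points of a sample lying in `W`; it is `0` for the empty sample. -/
noncomputable def empirical (S : Multiset X) (W : Set X) : ℝ := hits W S / Multiset.card S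

lemma hits_cons (W : Set X) (x : X) (S : Multiset X) :
    hits W (x ::ₘ S) = W.indicator 1 x + hits W S := by
  rw [hits, Multiset.map_cons, Multiset.sum_cons, hits]

lemma hits_cons_mem_Icc (W : Set X) (x : X) (S : Multiset X) :
    hits W (x ::ₘ S) ∈ Set.Icc (hits W S) (hits W S + 1) := by
  rw [hits_cons]
  by_cases hx : x ∈ W <;> simp [hx, add_comm]

lemma prod_map_exp_indicator_sub (W : Set X) (l c : ℝ) (S : Multiset X) :
    (S.map fun x => ENNReal.ofReal (Real.exp (l * (W.indicator 1 x - c)))).prod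
      = ENNReal.ofReal (Real.exp (l * (hits W S - c * Multiset.card S))) := by
  induction S using Multiset.induction_on with
  | empty => simp [hits]
  | cons x S ih =>
    rw [Multiset.map_cons, Multiset.prod_cons, ih, ← ENNReal.ofReal_mul (Real.exp_nonneg _),
      ← Real.exp_add, hits_cons, Multiset.card_cons, Nat.cast_succ]
    ring_nf

lemma probEvent_iid_le_exp (p : PMF X) (W : Set X) (m : ℕ) (l t : ℝ) :
    probEvent (iid p m) {S | t ≤ l * (hits W S - prob p W * m)}
      ≤ ENNReal.ofReal (Real.exp (m * (l ^ 2 / 8) - t)) := by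
  set φ : X → ℝ≥0∞ := fun x => ENNReal.ofReal (Real.exp (l * (W.indicator 1 x - prob p W)))
  have hmarkov : ENNReal.ofReal (Real.exp t)
      * probEvent (iid p m) {S | t ≤ l * (hits W S - prob p W * m)}
        ≤ ENNReal.ofReal (Real.exp (m * (l ^ 2 / 8))) := calc
    _ ≤ ENNReal.ofReal (Real.exp t)
        * probEvent (iid p m) {S | ENNReal.ofReal (Real.exp t) ≤ (S.map φ).prod} := by
      gcongr
      refine probEvent_mono _ fun S hS (ht : t ≤ _) => ?_
      rw [Set.mem_ofPred_eq, prod_map_exp_indicator_sub, card_of_mem_support_iid hS]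
      gcongr
    _ ≤ expect p φ ^ m := (mul_probEvent_le_expect _ _ _).trans_eq (expect_iid_prod p φ m)
    _ ≤ ENNReal.ofReal (Real.exp (l ^ 2 / 8)) ^ m := by
      gcongr
      exact expect_exp_indicator_sub_prob_le p W l
    _ = ENNReal.ofReal (Real.exp (m * (l ^ 2 / 8))) := by
      rw [← ENNReal.ofReal_pow (Real.exp_nonneg _), ← Real.exp_nat_mul]
  rw [Real.exp_sub, ENNReal.ofReal_div_of_pos (Real.exp_pos t),
    ENNReal.le_div_iff_mul_le (by simp [Real.exp_pos]) (by simp), mul_comm]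
  exact hmarkov

lemma probEvent_iid_le_abs_hits_sub (p : PMF X) (W : Set X) (m : ℕ) {e : ℝ} (he : 0 ≤ e) :
    probEvent (iid p m) {S | e * m ≤ |hits W S - prob p W * m|}
      ≤ 2 * ENNReal.ofReal (Real.exp (-2 * e ^ 2 * m)) := by
  have htail : ∀ l : ℝ, l ^ 2 = (4 * e) ^ 2 →
      probEvent (iid p m) {S | 4 * e ^ 2 * m ≤ l * (hits W S - prob p W * m)}
        ≤ ENNReal.ofReal (Real.exp (-2 * e ^ 2 * m)) := by
    intro l hl
    convert probEvent_iid_le_exp p W m l (4 * e ^ 2 * m) using 3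
    rw [hl]
    ring
  have hcover : {S | e * m ≤ |hits W S - prob p W * m|}
      ⊆ {S | 4 * e ^ 2 * m ≤ 4 * e * (hits W S - prob p W * m)}
        ∪ {S | 4 * e ^ 2 * m ≤ -(4 * e) * (hits W S - prob p W * m)} := by
    intro S (hS : e * m ≤ _)
    rcases le_abs.1 hS with h | h
    · left; change 4 * e ^ 2 * m ≤ _; nlinarith
    · right; change 4 * e ^ 2 * m ≤ _; nlinarith
  calc _ ≤ _ := probEvent_mono _ fun S _ hS => hcover hS
    _ ≤ _ := probEvent_union_le _ _ _
    _ ≤ _ := add_le_add (htail _ rfl) (htail _ (neg_sq _))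
    _ = _ := (two_mul _).symm

lemma probEvent_iid_exists_erase_two_le (p : PMF X) (m : ℕ) (E : X → X → Set (Multiset X))
    {b : ℝ≥0∞} (hb : ∀ x y, probEvent (iid p m) (E x y) ≤ b) :
    probEvent (iid p (m + 2)) {S | ∃ x y T, S = x ::ₘ y ::ₘ T ∧ T ∈ E x y}
      ≤ (m + 2) * ((m + 1) * b) := by
  have hinner : ∀ x, probEvent (iid p (m + 1)) {S | ∃ y T, S = y ::ₘ T ∧ T ∈ E x y}
      ≤ (m + 1) * b := fun x =>
    (probEvent_iid_exists_erase_le p m (E x)).trans <| by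
      gcongr
      exact (expect_mono p (hb x)).trans_eq (expect_const p b)
  calc probEvent (iid p (m + 2)) {S | ∃ x y T, S = x ::ₘ y ::ₘ T ∧ T ∈ E x y}
      ≤ probEvent (iid p (m + 1 + 1))
        {S | ∃ x T, S = x ::ₘ T ∧ T ∈ {T | ∃ y T', T = y ::ₘ T' ∧ T' ∈ E x y}} :=
        probEvent_mono _ fun _ _ ⟨x, y, T, hS, hT⟩ => ⟨x, y ::ₘ T, hS, y, T, rfl, hT⟩
    _ ≤ (↑(m + 1) + 1) * expect p fun _ => (m + 1) * b :=
        (probEvent_iid_exists_erase_le p (m + 1) _).trans <| by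
          gcongr
          exact expect_mono p hinner
    _ = (m + 2) * ((m + 1) * b) := by
        rw [expect_const]
        push_cast
        ring

/-- The empirical frequencies of all the test events `W x y` determined by two distinct sample
points `x, y` are within `e` of their probabilities. -/
def IsRepresentative (W : X → X → Set X) (q : PMF X) (e : ℝ) (S : Multiset X) : Prop :=
  ∀ x ∈ S, ∀ y ∈ S, x ≠ y → |empirical S (W x y) - prob q (W x y)| ≤ e

/-- Once its two defining points are removed from the sample, a test event is independent of the
remaining points, and the removal changes its frequency by `O(1 / m)` only. -/
lemma probEvent_not_isRepresentative_le (W : X → X → Set X) (q : PMF X) {e : ℝ} {m : ℕ}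
    (he : 0 < e) (hm : 4 ≤ e * m) :
    probEvent (iid q (m + 2)) {S | ¬ IsRepresentative W q e S}
      ≤ (m + 2) * ((m + 1) * (2 * ENNReal.ofReal (Real.exp (-2 * (e / 2) ^ 2 * m)))) := by
  refine le_trans (probEvent_mono _ fun S hS hrep => ?_) (probEvent_iid_exists_erase_two_le q m
    (fun x y => {T | e / 2 * m ≤ |hits (W x y) T - prob q (W x y) * m|})
    fun x y => probEvent_iid_le_abs_hits_sub q (W x y) m (half_pos he).le)
  obtain ⟨x, hx, y, hy, hxy, hdev⟩ : ∃ x ∈ S, ∃ y ∈ S, x ≠ y ∧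
      e < |empirical S (W x y) - prob q (W x y)| := by
    simpa [IsRepresentative] using hrep
  obtain ⟨S', rfl⟩ := Multiset.exists_cons_of_mem hx
  obtain ⟨T, rfl⟩ := Multiset.exists_cons_of_mem ((Multiset.mem_cons.1 hy).resolve_left hxy.symm)
  refine ⟨x, y, T, rfl, ?_⟩
  change e / 2 * m ≤ _
  set P := prob q (W x y)
  have hP : P ∈ Set.Icc (0 : ℝ) 1 := ⟨prob_nonneg q _, prob_le_one q _⟩
  have hpos : (0 : ℝ) < m + 2 := by positivity
  rw [empirical, card_of_mem_support_iid hS, Nat.cast_add, Nat.cast_two, div_sub' hpos.ne',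
    abs_div, abs_of_pos hpos, lt_div_iff₀ hpos] at hdev
  obtain ⟨hx₁, hx₂⟩ := hits_cons_mem_Icc (W x y) x (y ::ₘ T)
  obtain ⟨hy₁, hy₂⟩ := hits_cons_mem_Icc (W x y) y T
  rcases lt_abs.1 hdev with h | h
  · refine le_trans ?_ (le_abs_self _)
    nlinarith [hP.1, hP.2]
  · refine le_trans ?_ (neg_le_abs _)
    nlinarith [hP.1, hP.2]

lemma eventually_probEvent_not_isRepresentative_le {e : ℝ} (he : 0 < e) {δ : ℝ≥0∞} (hδ : 0 < δ) :
    ∀ᶠ m in atTop, ∀ (W : X → X → Set X) (q : PMF X),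
      probEvent (iid q m) {S | ¬ IsRepresentative W q e S} ≤ δ := by
  have hdecay : Tendsto (fun m : ℕ =>
      ((m : ℝ) + 2) * ((m + 1) * (2 * Real.exp (-2 * (e / 2) ^ 2) ^ m))) atTop (𝓝 0) := by
    have hr : |Real.exp (-2 * (e / 2) ^ 2)| < 1 := by
      rw [Real.abs_exp, Real.exp_lt_one_iff]
      nlinarith [sq_pos_of_pos (half_pos he)]
    have h := fun k => tendsto_pow_const_mul_const_pow_of_abs_lt_one k hr
    convert ((h 2).const_mul 2).add (((h 1).const_mul 6).add ((h 0).const_mul 4)) using 1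
    · ext m; ring
    · simp
  have hbound := (ENNReal.tendsto_ofReal hdecay).eventually_le_const
    (ENNReal.ofReal_zero.trans_lt hδ)
  have hlarge : ∀ᶠ m : ℕ in atTop, 4 ≤ e * m :=
    (tendsto_natCast_atTop_atTop.const_mul_atTop he).eventually_ge_atTop 4
  rw [← map_add_atTop_eq_nat 2, eventually_map]
  filter_upwards [hbound, hlarge] with m hb hm W q
  refine (probEvent_not_isRepresentative_le W q he hm).trans (le_of_eq_of_le ?_ hb)
  rw [mul_comm _ (m : ℝ), Real.exp_nat_mul, ENNReal.ofReal_mul (by positivity),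
    ENNReal.ofReal_mul (by positivity), ENNReal.ofReal_mul zero_le_two,
    ENNReal.ofReal_add m.cast_nonneg zero_le_two, ENNReal.ofReal_add m.cast_nonneg zero_le_one,
    ENNReal.ofReal_natCast, ENNReal.ofReal_ofNat, ENNReal.ofReal_one]

lemma eventually_probEvent_iid_notMem_le {ρ δ : ℝ≥0∞} (hρ : 0 < ρ) (hδ : 0 < δ) :
    ∀ᶠ m in atTop, ∀ (q : PMF X) (x : X), ρ ≤ q x → probEvent (iid q m) {S | x ∉ S} ≤ δ := by
  have hlt : 1 - ρ < 1 := ENNReal.sub_lt_self ENNReal.one_ne_top one_ne_zero hρ.ne'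
  filter_upwards [(ENNReal.tendsto_pow_atTop_nhds_zero_of_lt_one hlt).eventually_le_const hδ]
    with m hm q x hx
  have hset : {S : Multiset X | x ∉ S} = {S | ∀ y ∈ S, y ∈ ({x}ᶜ : Set X)} :=
    Set.ext fun S => ⟨fun h y hy hyx => h (hyx ▸ hy), fun h hxS => h x hxS rfl⟩
  rw [hset, probEvent_iid_forall_mem, probEvent_compl, probEvent_singleton]
  exact le_trans (by gcongr) hm

end Concentration

section MinimumDistance

open Filter

variable {X : Type*}

/-- The distance of the hypothesis `hyp z` from the empirical measure, tested on the Scheffé sets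
of all pairs of hypotheses named by points of the sample. -/
noncomputable def score (hyp : X → PMF X) (S : Multiset X) (z : X) : ℝ≥0 :=
  open Classical in S.toFinset.offDiag.sup fun a =>
    ‖prob (hyp z) (scheffe (hyp a.1) (hyp a.2)) - empirical S (scheffe (hyp a.1) (hyp a.2))‖₊

variable {hyp : X → PMF X} {S : Multiset X}

lemma abs_prob_sub_empirical_le_score (z : X) {x y : X} (hx : x ∈ S) (hy : y ∈ S) (hxy : x ≠ y) :
    |prob (hyp z) (scheffe (hyp x) (hyp y)) - empirical S (scheffe (hyp x) (hyp y))|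
      ≤ score hyp S z := by
  classical
  have hmem : (x, y) ∈ S.toFinset.offDiag := by simp [hx, hy, hxy]
  exact NNReal.coe_le_coe.2 (Finset.le_sup (f := fun a : X × X =>
    ‖prob (hyp z) (scheffe (hyp a.1) (hyp a.2)) - empirical S (scheffe (hyp a.1) (hyp a.2))‖₊) hmem)

lemma score_le_of_isRepresentative {q : PMF X} {e : ℝ} (he : 0 ≤ e)
    (hS : IsRepresentative (fun x y => scheffe (hyp x) (hyp y)) q e S) (z : X) :
    score hyp S z ≤ tv (hyp z) q + e := by
  classical
  have h0 : 0 ≤ tv (hyp z) q + e := add_nonneg (tv_nonneg _ _) he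
  rw [← Real.le_toNNReal_iff_coe_le h0, score]
  refine Finset.sup_le fun ⟨x, y⟩ hxy => (Real.le_toNNReal_iff_coe_le h0).2 ?_
  obtain ⟨hx, hy, hne⟩ : x ∈ S ∧ y ∈ S ∧ x ≠ y := by simpa using hxy
  refine (abs_sub_le _ (prob q (scheffe (hyp x) (hyp y))) _).trans ?_
  rw [abs_sub_comm (prob q _)]
  exact add_le_add (abs_prob_sub_le_tv _ _ _) (hS x hx y hy hne)

lemma tv_le_score_add_score {x y : X} (hx : x ∈ S) (hy : y ∈ S) :
    tv (hyp x) (hyp y) ≤ score hyp S x + score hyp S y := by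
  obtain rfl | hxy := eq_or_ne x y
  · rw [tv_self]
    positivity
  · have h₁ := abs_le.1 (abs_prob_sub_empirical_le_score (hyp := hyp) x hx hy hxy)
    have h₂ := abs_le.1 (abs_prob_sub_empirical_le_score (hyp := hyp) y hx hy hxy)
    rw [tv_eq_prob_scheffe_sub]
    linarith

/-- A learner whose output on a representative sample is within twice the distance of every
hypothesis named by a sample point, as guaranteed by minimizing `score`. -/
def IsMinimumDistanceLearner (hyp : X → PMF X) (A : Multiset X → PMF X) : Prop :=
  ∀ (S : Multiset X) (q : PMF X) (e : ℝ), 0 ≤ e →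
    IsRepresentative (fun x y => scheffe (hyp x) (hyp y)) q e S →
      ∀ x ∈ S, tv (A S) (hyp x) ≤ 2 * (tv (hyp x) q + e)

lemma exists_isMinimumDistanceLearner [Nonempty X] (hyp : X → PMF X) :
    ∃ A, IsMinimumDistanceLearner hyp A := by
  classical
  have hmin : ∀ S : Multiset X, ∃ z, ∀ x ∈ S, z ∈ S ∧ score hyp S z ≤ score hyp S x := by
    intro S
    obtain rfl | hS := eq_or_ne S 0
    · exact ⟨Classical.arbitrary X, by simp⟩
    · obtain ⟨z, hz, hle⟩ := S.toFinset.exists_min_image (score hyp S)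
        (Multiset.toFinset_nonempty.2 hS)
      exact ⟨z, fun x hx => ⟨Multiset.mem_toFinset.1 hz, hle x (Multiset.mem_toFinset.2 hx)⟩⟩
  choose sel hsel using hmin
  refine ⟨fun S => hyp (sel S), fun S q e he hS x hx => ?_⟩
  obtain ⟨hmem, hle⟩ := hsel S x hx
  calc tv (hyp (sel S)) (hyp x) ≤ score hyp S (sel S) + score hyp S x :=
        tv_le_score_add_score hmem hx
    _ ≤ score hyp S x + score hyp S x := by gcongr
    _ ≤ 2 * (tv (hyp x) q + e) := by linarith [score_le_of_isRepresentative he hS x]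

lemma IsMinimumDistanceLearner.eventually_tv_le {A : Multiset X → PMF X}
    (hA : IsMinimumDistanceLearner hyp A) {ρ δ : ℝ≥0∞} {e : ℝ} (hρ : 0 < ρ) (hδ : 0 < δ)
    (he : 0 < e) :
    ∀ᶠ m in atTop, ∀ (p p' : PMF X) (x : X), tv (hyp x) p ≤ e → ρ ≤ p' x →
      1 - δ ≤ probEvent (iid p' m) {S | tv (A S) p ≤ 2 * tv p p' + 5 * e} := by
  have hδ' : 0 < δ / 2 := ENNReal.half_pos hδ.ne'
  filter_upwards [eventually_probEvent_iid_notMem_le hρ hδ',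
    eventually_probEvent_not_isRepresentative_le he hδ'] with m hmiss hrep p p' x hx hρx
  refine one_sub_le_probEvent (E' := {S | x ∉ S} ∪ {S |
    ¬ IsRepresentative (fun x y => scheffe (hyp x) (hyp y)) p' e S}) (fun S hfar => ?_)
    (calc
      _ ≤ _ := probEvent_union_le _ _ _
      _ ≤ δ / 2 + δ / 2 := add_le_add (hmiss p' x hρx) (hrep _ p')
      _ = δ := ENNReal.add_halves δ)
  by_contra hgood
  obtain ⟨hxS, hS⟩ := not_or.1 hgood
  have hsel := hA S p' e he.le (not_not.1 hS) x (not_not.1 hxS)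
  have htri := tv_triangle (hyp x) p p'
  exact hfar (show tv (A S) p ≤ 2 * tv p p' + 5 * e by linarith [tv_triangle (A S) (hyp x) p])

end MinimumDistance

section PointCompression

open Filter

variable {X : Type*} {C : Set (PMF X)}

/-- Compression to a single sample point: every `p` in the class is named, up to accuracy `e`, by a
point whose mass under `p` is bounded below uniformly over the class. -/
def HasPointCompression (C : Set (PMF X)) : Prop :=
  ∃ hyp : X → PMF X, ∀ e : ℝ, 0 < e → ∃ ρ : ℝ≥0∞, 0 < ρ ∧
    ∀ p ∈ C, ∃ x, tv (hyp x) p ≤ e ∧ ρ ≤ p x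

lemma half_le_of_eq_mixture {p p' r : PMF X} {η : ℝ} (hη : η ≤ 1 / 2)
    (h : ∀ x, p' x = ENNReal.ofReal (1 - η) * p x + ENNReal.ofReal η * r x) (x : X) :
    2⁻¹ * p x ≤ p' x := by
  have hhalf : (2⁻¹ : ℝ≥0∞) ≤ ENNReal.ofReal (1 - η) := by
    rw [← ENNReal.ofReal_ofNat 2, ← ENNReal.ofReal_inv_of_pos zero_lt_two]
    exact ENNReal.ofReal_le_ofReal (by linarith)
  rw [h]
  exact le_add_right (by gcongr)

theorem HasPointCompression.obliviouslyAdditivelyRobustlyLearnable [Nonempty X]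
    (hC : HasPointCompression C) : ObliviouslyAdditivelyRobustlyLearnable C 2 := by
  obtain ⟨hyp, hcomp⟩ := hC
  obtain ⟨A, hA⟩ := exists_isMinimumDistanceLearner hyp
  have hlearn : ∀ ε δ : ℝ, 0 < ε → 0 < δ → ∃ M : ℕ, ∀ p ∈ C, ∀ η : ℝ, 0 ≤ η → η ≤ 1 / 2 →
      ∀ r p' : PMF X, (∀ x, p' x = ENNReal.ofReal (1 - η) * p x + ENNReal.ofReal η * r x) →
        ∀ m ≥ M, 1 - ENNReal.ofReal δ ≤ probEvent (iid p' m) {S | tv (A S) p ≤ 2 * η + ε} := by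
    intro ε δ hε hδ
    obtain ⟨ρ, hρ, hC⟩ := hcomp (ε / 5) (by positivity)
    obtain ⟨M, hM⟩ := eventually_atTop.1 <| hA.eventually_tv_le (e := ε / 5)
      (ENNReal.mul_pos (by simp) hρ.ne' : 0 < 2⁻¹ * ρ) (ENNReal.ofReal_pos.2 hδ) (by positivity)
    refine ⟨M, fun p hp η h0 h1 r p' hmix m hm => ?_⟩
    obtain ⟨x, hxp, hpx⟩ := hC p hp
    have hp' : tv p p' ≤ η := tv_le_of_eq_mixture h0 (by linarith) hmix
    have hρ' : 2⁻¹ * ρ ≤ p' x := (by gcongr : _ ≤ _).trans (half_le_of_eq_mixture h1 hmix x)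
    refine (hM m hm p p' x hxp hρ').trans (probEvent_mono _ fun S _ hS => ?_)
    exact le_trans (show tv (A S) p ≤ 2 * tv p p' + 5 * (ε / 5) from hS) (by linarith)
  choose! mc hmc using hlearn
  refine ⟨A, mc, fun p hp η h0 _ r p' hmix ε δ hε _ hδ _ m hm => ?_⟩
  rcases le_or_gt η (1 / 2) with hη | hη
  · exact hmc ε δ hε hδ p hp η h0 hη r p' hmix m hm
  · rw [← probEvent_univ (iid p' m)]
    refine tsub_le_self.trans (probEvent_mono _ fun S _ _ => ?_)
    exact (tv_le_one (A S) p).trans (by linarith)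

lemma ObliviouslyAdditivelyRobustlyLearnable.mono {a b : ℝ}
    (hC : ObliviouslyAdditivelyRobustlyLearnable C a) (hab : a ≤ b) :
    ObliviouslyAdditivelyRobustlyLearnable C b := by
  obtain ⟨A, mc, h⟩ := hC
  refine ⟨A, mc, fun p hp η h0 h1 r p' hmix ε δ hε hε1 hδ hδ1 m hm =>
    (h p hp η h0 h1 r p' hmix ε δ hε hε1 hδ hδ1 m hm).trans (probEvent_mono _ fun S _ hS => ?_)⟩
  exact le_trans (show tv (A S) p ≤ a * η + ε from hS) (by gcongr)

end PointCompression

section ClassCompression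

variable {B : ℕ → Finset ℕ} {g : ℕ → ℕ} {i j k : ℕ} {p q : PMF (ℕ × ℕ)}

lemma IsPijk.apply_origin (h : IsPijk B i j k p) : p (0, 0) = 1 - (j : ℝ≥0∞)⁻¹ := by
  rw [h]; simp

lemma IsPijk.apply_label (h : IsPijk B i j k p) : p (i, 2 * j + 2) = (k : ℝ≥0∞)⁻¹ := by
  rw [h]; simp

lemma IsPijk.eq (hp : IsPijk B i j k p) (hq : IsPijk B i j k q) : p = q :=
  PMF.ext fun x => (hp x).trans (hq x).symm

/-- The hypothesis named by a point: a label `(i, 2j + 2)` names `p_{i,j,g(j)}`, and any other point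
names the point mass at the origin. -/
noncomputable def namedHypothesis (B : ℕ → Finset ℕ) (g : ℕ → ℕ) (x : ℕ × ℕ) : PMF (ℕ × ℕ) :=
  open Classical in
  if h : ∃ p j, IsPijk B x.1 j (g j) p ∧ x.2 = 2 * j + 2 then h.choose else PMF.pure (0, 0)

lemma namedHypothesis_label (h : IsPijk B i j (g j) p) :
    namedHypothesis B g (i, 2 * j + 2) = p := by
  have hex : ∃ p j', IsPijk B i j' (g j') p ∧ 2 * j + 2 = 2 * j' + 2 := ⟨p, j, h, rfl⟩
  obtain ⟨j', hj', heq⟩ := hex.choose_spec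
  obtain rfl : j = j' := by omega
  rw [namedHypothesis, dif_pos hex]
  exact hj'.eq h

lemma namedHypothesis_origin : namedHypothesis B g (0, 0) = PMF.pure (0, 0) :=
  dif_neg fun ⟨_, _, _, h⟩ => Nat.succ_ne_zero _ h.symm

lemma IsPijk.tv_pure_origin_le (h : IsPijk B i j k p) (hj : 1 ≤ j) :
    tv (PMF.pure (0, 0)) p ≤ 1 / j := by
  have hinv : (j : ℝ≥0∞)⁻¹ ≤ 1 := ENNReal.inv_le_one.2 (by exact_mod_cast hj)
  refine (tv_pure_le _ _).trans_eq ?_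
  rw [h.apply_origin, ENNReal.toReal_sub_of_le hinv ENNReal.one_ne_top, ENNReal.toReal_inv]
  simp

lemma IsPijk.half_le_apply_origin (h : IsPijk B i j k p) (hj : 2 ≤ j) : 2⁻¹ ≤ p (0, 0) := by
  rw [h.apply_origin, ← ENNReal.one_sub_inv_two]
  gcongr
  exact_mod_cast hj

/-- Hypotheses with large `j` are close to the point mass at the origin, and only finitely many
label weights `1 / g j` remain. -/
theorem hasPointCompression_Cg (B : ℕ → Finset ℕ) (g : ℕ → ℕ) : HasPointCompression (Cg B g) := by
  refine ⟨namedHypothesis B g, fun e he => ?_⟩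
  obtain ⟨N, hN⟩ := exists_nat_ge (1 / e)
  refine ⟨2⁻¹ ⊓ ((∑ j ∈ Finset.range (max 2 N), g j : ℕ) : ℝ≥0∞)⁻¹,
    lt_min (by simp) (ENNReal.inv_pos.2 (ENNReal.natCast_ne_top _)), ?_⟩
  rintro p ⟨i, j, hj, -, -, hp⟩
  rcases lt_or_ge j (max 2 N) with hjN | hjN
  · refine ⟨(i, 2 * j + 2), ?_, inf_le_right.trans ?_⟩
    · rw [namedHypothesis_label hp, tv_self]
      exact he.le
    · rw [hp.apply_label]
      gcongr
      exact Finset.single_le_sum_of_canonicallyOrdered (Finset.mem_range.2 hjN)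
  · obtain ⟨h2, hNj⟩ := max_le_iff.1 hjN
    refine ⟨(0, 0), ?_, inf_le_left.trans (hp.half_le_apply_origin h2)⟩
    rw [namedHypothesis_origin]
    calc tv (PMF.pure (0, 0)) p ≤ 1 / j := hp.tv_pure_origin_le hj
      _ ≤ 1 / (1 / e) := by
        gcongr
        exact hN.trans (by exact_mod_cast hNj)
      _ = e := one_div_one_div e

end ClassCompression

section Averaging

variable {Z F : Type*} [Finite F] [Nonempty F]

lemma exists_two_mul_probEvent_le (ν : PMF Z) (E : F → Set Z) (bad : Set Z)
    (τ : Z → Equiv.Perm F) (hτ : ∀ z ∉ bad, ∀ f, z ∈ E f → z ∉ E (τ z f)) :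
    ∃ f, 2 * probEvent ν (E f) ≤ 1 + probEvent ν bad := by
  cases nonempty_fintype F
  have hpair : ∀ z f, (E f).indicator 1 z + (E (τ z f)).indicator 1 z
      ≤ (1 : ℝ≥0∞) + bad.indicator 1 z := by
    intro z f
    by_cases hz : z ∈ bad
    · rw [Set.indicator_of_mem hz]
      exact add_le_add (Set.indicator_le_self _ _ z) (Set.indicator_le_self _ _ z)
    · by_cases hf : z ∈ E f
      · simp [hf, hτ z hz f hf]
      · simpa [hf, hz] using Set.indicator_le_self (E (τ z f)) (1 : Z → ℝ≥0∞) z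
  have hsum : ∀ z, 2 * ∑ f, (E f).indicator 1 z
      ≤ Fintype.card F * ((1 : ℝ≥0∞) + bad.indicator 1 z) := fun z => calc
    2 * ∑ f, (E f).indicator 1 z
      = ∑ f, ((E f).indicator 1 z + (E (τ z f)).indicator 1 z) := by
        rw [Finset.sum_add_distrib, Equiv.sum_comp (τ z) fun f => (E f).indicator 1 z, two_mul]
    _ ≤ ∑ _f : F, ((1 : ℝ≥0∞) + bad.indicator 1 z) := Finset.sum_le_sum fun f _ => hpair z f
    _ = _ := by rw [Finset.sum_const, Finset.card_univ, nsmul_eq_mul]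
  obtain ⟨f, hf⟩ := Finite.exists_min fun f => probEvent ν (E f)
  have hexpect : ∑ f, probEvent ν (E f) = expect ν fun z => ∑ f, (E f).indicator 1 z := by
    simp only [probEvent_eq_expect, expect, Finset.mul_sum]
    exact (Summable.tsum_finsetSum fun _ _ => ENNReal.summable).symm
  refine ⟨f, (ENNReal.mul_le_mul_iff_right (by simp)
    (ENNReal.natCast_ne_top (Fintype.card F))).1 ?_⟩
  calc (Fintype.card F : ℝ≥0∞) * (2 * probEvent ν (E f))
      = 2 * ∑ _f : F, probEvent ν (E f) := by
        rw [Finset.sum_const, Finset.card_univ, nsmul_eq_mul, mul_left_comm]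
    _ ≤ 2 * ∑ f, probEvent ν (E f) := by gcongr; exact hf _
    _ ≤ Fintype.card F * (1 + probEvent ν bad) := by
        rw [hexpect, ← expect_const_mul, probEvent_eq_expect, ← expect_const ν 1, ← expect_add,
          ← expect_const_mul]
        exact expect_mono ν hsum

end Averaging

section AddingPoints

variable {X : Type*}

/-- The deterministic adversary that adds the points `r S` to the sample `S`. -/
noncomputable def addAdversary (r : Multiset X → Multiset X) : Adversary X :=
  fun S => PMF.pure (S + r S)

lemma isAdditive_addAdversary (r : Multiset X → Multiset X) : IsAdditive (addAdversary r) := by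
  intro S T hT
  obtain rfl : T = S + r S := by simpa [addAdversary] using hT
  exact Multiset.le_add_right S (r S)

lemma fixedBudgetAdd_addAdversary {r : Multiset X → Multiset X} {η : ℝ} (hη : 0 ≤ η)
    (hr : ∀ S, Multiset.card (r S) = ⌊η * Multiset.card S⌋₊) :
    FixedBudgetAdd (addAdversary r) η := by
  refine ⟨fun m => m + ⌊η * m⌋₊, fun S T hT => ?_, fun m => ?_⟩
  · obtain rfl : T = S + r S := by simpa [addAdversary] using hT
    rw [Multiset.card_add, hr]
  · rw [Nat.cast_add, add_sub_cancel_left]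
    exact ⟨Nat.sub_one_lt_floor _, Nat.floor_le (by positivity)⟩

/-- The multiset `T` padded with copies of `x` to size `L`, or `L` copies of `x` if `T` is too
large. -/
def padTo (L : ℕ) (x : X) (T : Multiset X) : Multiset X :=
  if Multiset.card T ≤ L then T + Multiset.replicate (L - Multiset.card T) x
  else Multiset.replicate L x

lemma card_padTo (L : ℕ) (x : X) (T : Multiset X) : Multiset.card (padTo L x T) = L := by
  unfold padTo
  split_ifs with h
  · rw [Multiset.card_add, Multiset.card_replicate, Nat.add_sub_cancel' h]
  · exact Multiset.card_replicate L x

end AddingPoints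

section Confusion

variable {n : ℕ}

/-- The position `a` coded by a bit string `f`: one of the two numbers `2a` and `2a + 1`. -/
def codePoint (f : Fin n → Bool) (a : Fin n) : ℕ := 2 * a + (f a).toNat

lemma codePoint_eq_iff {f f' : Fin n → Bool} {a b : Fin n} :
    codePoint f a = codePoint f' b ↔ a = b ∧ f a = f' b := by
  constructor
  · intro h
    have hf := Bool.toNat_lt (f a)
    have hf' := Bool.toNat_lt (f' b)
    unfold codePoint at h
    have hbit : (f a).toNat = (f' b).toNat := by omega
    exact ⟨Fin.ext (by omega), by rw [← Bool.ofNat_toNat (f a), hbit, Bool.ofNat_toNat]⟩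
  · rintro ⟨rfl, h⟩
    rw [codePoint, codePoint, h]

/-- The set coded by a bit string, containing one of `2a` and `2a + 1` for each position `a`. -/
def codeSet (f : Fin n → Bool) : Finset ℕ := Finset.univ.image (codePoint f)

lemma codePoint_mem_codeSet {f f' : Fin n → Bool} {a : Fin n} :
    codePoint f a ∈ codeSet f' ↔ f a = f' a := by
  simp [codeSet, codePoint_eq_iff, eq_comm]

lemma card_codeSet (f : Fin n → Bool) : (codeSet f).card = n := by
  rw [codeSet, Finset.card_image_of_injective _ fun a b h => (codePoint_eq_iff.1 h).1,
    Finset.card_univ, Fintype.card_fin]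

lemma codeSet_injective : Function.Injective (codeSet (n := n)) := fun _ _ h =>
  funext fun _ => codePoint_mem_codeSet.1 (h ▸ codePoint_mem_codeSet.2 rfl)

/-- The part of a draw from `p_{i,j,k}` that does not depend on `i`: the origin (`none`), the label
(`some none`), or a position in the set `B i` (`some (some a)`). -/
abbrev Latent (n : ℕ) := Option (Option (Fin n))

/-- The weights of the three kinds of latent points under `p_{i,j,k}`. -/
noncomputable def latentWeight (n j k : ℕ) : Latent n → ℝ≥0∞
  | none => 1 - (j : ℝ≥0∞)⁻¹
  | some none => (k : ℝ≥0∞)⁻¹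
  | some (some _) => ((j : ℝ≥0∞)⁻¹ - (k : ℝ≥0∞)⁻¹) * (n : ℝ≥0∞)⁻¹

lemma sum_latentWeight {n j k : ℕ} (hn : 0 < n) (hj : 1 ≤ j) (hjk : j < k) :
    ∑ y, latentWeight n j k y = 1 := by
  have hkj : (k : ℝ≥0∞)⁻¹ ≤ (j : ℝ≥0∞)⁻¹ := ENNReal.inv_le_inv.2 (by exact_mod_cast hjk.le)
  have hj1 : (j : ℝ≥0∞)⁻¹ ≤ 1 := ENNReal.inv_le_one.2 (by exact_mod_cast hj)
  have hnn : (n : ℝ≥0∞) * (n : ℝ≥0∞)⁻¹ = 1 :=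
    ENNReal.mul_inv_cancel (by exact_mod_cast hn.ne') (ENNReal.natCast_ne_top n)
  simp only [Fintype.sum_option, latentWeight, Finset.sum_const, Finset.card_univ,
    Fintype.card_fin, nsmul_eq_mul]
  rw [mul_left_comm, hnn, mul_one, add_tsub_cancel_of_le hkj, tsub_add_cancel_of_le hj1]

/-- The distribution of the latent part of a draw from `p_{i,j,k}` with `|B i| = n`. -/
noncomputable def latentPMF {n j k : ℕ} (hn : 0 < n) (hj : 1 ≤ j) (hjk : j < k) : PMF (Latent n) :=
  PMF.ofFintype (latentWeight n j k) (sum_latentWeight hn hj hjk)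

/-- The point of `ℕ × ℕ` observed for a latent point when `f` codes the set `B i`. -/
def observe (i j : ℕ) (f : Fin n → Bool) : Latent n → ℕ × ℕ
  | none => (0, 0)
  | some none => (i, 2 * j + 2)
  | some (some a) => (codePoint f a, 2 * j + 1)

lemma isPijk_map_observe {B : ℕ → Finset ℕ} {i j k : ℕ} {f : Fin n → Bool} (hB : B i = codeSet f)
    (hn : 0 < n) (hj : 1 ≤ j) (hjk : j < k) :
    IsPijk B i j k ((latentPMF hn hj hjk).map (observe i j f)) := by
  intro x
  have hpos : ∑ a : Fin n, (if x = observe i j f (some (some a)) then (n : ℝ≥0∞)⁻¹ else 0)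
      = if x.1 ∈ B i ∧ x.2 = 2 * j + 1 then ((B i).card : ℝ≥0∞)⁻¹ else 0 := by
    rw [hB, card_codeSet]
    split_ifs with hx
    · obtain ⟨a, -, ha⟩ := Finset.mem_image.1 hx.1
      have hxa : ∀ b, x = observe i j f (some (some b)) ↔ b = a := fun b => by
        simp [observe, Prod.ext_iff, hx.2, ← ha, codePoint_eq_iff, eq_comm,
          and_iff_left_of_imp (congrArg f)]
      simp [hxa]
    · refine Finset.sum_eq_zero fun a _ => if_neg ?_
      rintro rfl
      exact hx ⟨Finset.mem_image_of_mem _ (Finset.mem_univ a), rfl⟩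
  classical
  rw [PMF.map_apply, tsum_fintype, Fintype.sum_option, Fintype.sum_option, ← hpos, Finset.mul_sum]
  rw [add_assoc, add_comm (∑ _, _)]
  refine congrArg₂ _ ?_ (congrArg₂ _ ?_ (Finset.sum_congr rfl fun a _ => ?_)) <;>
    simp only [observe, latentPMF, PMF.ofFintype_apply, latentWeight] <;>
    split_ifs with h <;> simp [h]

end Confusion

section Forgery

variable {n j : ℕ} {f : Fin n → Bool}

/-- The bit string `f` with all bits outside `A` flipped. -/
def flipOutside (A : Finset (Fin n)) : Equiv.Perm (Fin n → Bool) :=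
  Function.Involutive.toPerm (fun f a => if a ∈ A then f a else !f a) fun f => by
    ext a
    by_cases ha : a ∈ A <;> simp [ha]

lemma flipOutside_flipOutside (A : Finset (Fin n)) (f : Fin n → Bool) :
    flipOutside A (flipOutside A f) = f :=
  (flipOutside A).left_inv f

lemma flipOutside_apply_eq_iff {A : Finset (Fin n)} {a : Fin n} :
    flipOutside A f a = f a ↔ a ∈ A := by
  change (if a ∈ A then f a else !f a) = f a ↔ a ∈ A
  split_ifs with ha <;> simp [ha]

lemma observe_ne_observe_flipOutside {A : Finset (Fin n)} {a : Fin n} (ha : a ∉ A) (i i' : ℕ)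
    (y : Latent n) : observe i j f (some (some a)) ≠ observe i' j (flipOutside A f) y := by
  intro h
  rcases y with _ | _ | b
  · simp [observe] at h
  · simp [observe] at h
  · obtain ⟨rfl, hab⟩ := codePoint_eq_iff.1 (Prod.ext_iff.1 h).1
    exact ha (flipOutside_apply_eq_iff.1 hab.symm)

/-- The positions occurring in a latent sample. -/
def latentSeen (s : Multiset (Latent n)) : Finset (Fin n) := {a | some (some a) ∈ s}

lemma card_latentSeen_le (s : Multiset (Latent n)) :
    (latentSeen s).card ≤ Multiset.card s := by
  have hsub : (latentSeen s).image (fun a => some (some a)) ⊆ s.toFinset := by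
    simp [Finset.image_subset_iff, latentSeen]
  calc (latentSeen s).card = ((latentSeen s).image fun a => some (some a)).card :=
        (Finset.card_image_of_injective _
          ((Option.some_injective _).comp (Option.some_injective _))).symm
    _ ≤ s.toFinset.card := Finset.card_le_card hsub
    _ ≤ Multiset.card s := s.toFinset_card_le

/-- The positions occurring in an observed sample. -/
def seen (n j : ℕ) (S : Multiset (ℕ × ℕ)) : Finset (Fin n) :=
  {a | ∃ f : Fin n → Bool, (codePoint f a, 2 * j + 1) ∈ S}

lemma seen_map_observe (i j : ℕ) (f : Fin n → Bool) (s : Multiset (Latent n)) :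
    seen n j (s.map (observe i j f)) = latentSeen s := by
  ext a
  simp only [seen, latentSeen, Finset.mem_filter, Finset.mem_univ, true_and, Multiset.mem_map]
  constructor
  · rintro ⟨f', _ | _ | b, hy, h⟩
    · simp [observe] at h
    · simp [observe] at h
    · obtain rfl : b = a := (codePoint_eq_iff.1 (Prod.ext_iff.1 h).1).1
      exact hy
  · exact fun ha => ⟨f, _, ha, rfl⟩

lemma filter_label_map_observe (i j : ℕ) (f : Fin n → Bool) (s : Multiset (Latent n)) :
    (s.map (observe i j f)).filter (fun x => x.2 = 2 * j + 2)
      = Multiset.replicate (s.count (some none)) (i, 2 * j + 2) := by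
  have hlabel : ∀ y : Latent n, (observe i j f y).2 = 2 * j + 2 ↔ y = some none := by
    rintro (_ | _ | a) <;> simp [observe]
  simp only [Multiset.filter_map, Function.comp_def, hlabel, Multiset.filter_eq',
    Multiset.map_replicate]
  rfl

lemma map_observe_eq_replicate_add (i j : ℕ) (f : Fin n → Bool) (s : Multiset (Latent n)) :
    s.map (observe i j f) = Multiset.replicate (s.count (some none)) (i, 2 * j + 2)
      + (s.filter (· ≠ some none)).map (observe i j f) := by
  conv_lhs => rw [← Multiset.filter_add_not (· = some none) s, Multiset.map_add,
    Multiset.filter_eq', Multiset.map_replicate, observe]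

lemma map_observe_flipOutside_latentSeen (i i' j : ℕ) (f : Fin n → Bool)
    (s : Multiset (Latent n)) :
    (s.filter (· ≠ some none)).map (observe i' j (flipOutside (latentSeen s) f))
      = (s.filter (· ≠ some none)).map (observe i j f) := by
  refine Multiset.map_congr rfl ?_
  rintro (_ | _ | a) hy
  · rfl
  · simp at hy
  · have ha : a ∈ latentSeen s := by simpa [latentSeen] using Multiset.mem_of_mem_filter hy
    simp [observe, codePoint, flipOutside_apply_eq_iff.2 ha]

/-- The points added to the sample `S` by an adversary with budget `η`: for each label naming the
set coded by `f`, the label of the set obtained by flipping the bits of `f` at positions that do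
not occur in `S`. Here `idx f` is the index of the set coded by `f`. -/
noncomputable def forgery (idx : (Fin n → Bool) → ℕ) (j : ℕ) (η : ℝ) (S : Multiset (ℕ × ℕ)) :
    Multiset (ℕ × ℕ) :=
  padTo ⌊η * Multiset.card S⌋₊ (0, 0) <|
    (S.filter fun x => x.2 = 2 * j + 2).map fun x =>
      (idx (flipOutside (seen n j S) (Function.invFun idx x.1)), 2 * j + 2)

variable {idx : (Fin n → Bool) → ℕ} {η : ℝ}

lemma forgery_map_observe (hidx : Function.Injective idx) {s : Multiset (Latent n)}
    (hs : s.count (some none) ≤ ⌊η * Multiset.card s⌋₊) :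
    forgery idx j η (s.map (observe (idx f) j f))
      = Multiset.replicate (s.count (some none)) (idx (flipOutside (latentSeen s) f), 2 * j + 2)
        + Multiset.replicate (⌊η * Multiset.card s⌋₊ - s.count (some none)) (0, 0) := by
  rw [forgery, filter_label_map_observe, Multiset.map_replicate, seen_map_observe,
    Function.leftInverse_invFun hidx f, Multiset.card_map, padTo, Multiset.card_replicate,
    if_pos hs]

/-- The corrupted sample the learner sees when `f` codes the set `B i` and `s` is the latent
sample. -/
noncomputable def corruptedSample (idx : (Fin n → Bool) → ℕ) (j : ℕ) (η : ℝ) (f : Fin n → Bool)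
    (s : Multiset (Latent n)) : Multiset (ℕ × ℕ) :=
  s.map (observe (idx f) j f) + forgery idx j η (s.map (observe (idx f) j f))

/-- The forged labels and the true labels trade places, and the other points do not change. -/
lemma corruptedSample_flipOutside (hidx : Function.Injective idx) {s : Multiset (Latent n)}
    (hs : s.count (some none) ≤ ⌊η * Multiset.card s⌋₊) :
    corruptedSample idx j η (flipOutside (latentSeen s) f) s = corruptedSample idx j η f s := by
  rw [corruptedSample, corruptedSample, forgery_map_observe hidx hs, forgery_map_observe hidx hs,
    flipOutside_flipOutside, map_observe_eq_replicate_add,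
    map_observe_eq_replicate_add (idx f) j f, map_observe_flipOutside_latentSeen (idx f)]
  abel

end Forgery

section LowerBound

variable {n j k : ℕ}

lemma card_compl_mul_le_tv_flipOutside (hn : 0 < n) (hj : 1 ≤ j) (hjk : j < k) (i i' : ℕ)
    (f : Fin n → Bool) (A : Finset (Fin n)) :
    (Aᶜ.card : ℝ) * (((j : ℝ)⁻¹ - (k : ℝ)⁻¹) * (n : ℝ)⁻¹)
      ≤ tv ((latentPMF hn hj hjk).map (observe i j f))
          ((latentPMF hn hj hjk).map (observe i' j (flipOutside A f))) := by
  have hkj : (k : ℝ≥0∞)⁻¹ ≤ (j : ℝ≥0∞)⁻¹ := ENNReal.inv_le_inv.2 (by exact_mod_cast hjk.le)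
  let U : Finset (Latent n) := Aᶜ.map (Function.Embedding.some.trans Function.Embedding.some)
  have hflip : prob ((latentPMF hn hj hjk).map (observe i' j (flipOutside A f)))
      (observe i j f '' U) = 0 := by
    have hempty : {y | observe i' j (flipOutside A f) y ∈ observe i j f '' U} = ∅ := by
      refine Set.eq_empty_of_forall_notMem ?_
      rintro y ⟨u, hu, huy⟩
      obtain ⟨a, ha, rfl⟩ := Finset.mem_map.1 (Finset.mem_coe.1 hu)
      exact observe_ne_observe_flipOutside (Finset.mem_compl.1 ha) i i' y huy
    rw [prob, probEvent_map, hempty, probEvent, MeasureTheory.measure_empty, ENNReal.toReal_zero]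
  have hU : probEvent (latentPMF hn hj hjk) U
      = Aᶜ.card * (((j : ℝ≥0∞)⁻¹ - (k : ℝ≥0∞)⁻¹) * (n : ℝ≥0∞)⁻¹) := by
    rw [probEvent, PMF.toOuterMeasure_apply_finset, Finset.sum_map, ← nsmul_eq_mul]
    exact Finset.sum_const _
  calc (Aᶜ.card : ℝ) * (((j : ℝ)⁻¹ - (k : ℝ)⁻¹) * (n : ℝ)⁻¹)
      = (probEvent (latentPMF hn hj hjk) U).toReal := by
        rw [hU]
        simp [ENNReal.toReal_sub_of_le hkj (by simpa using Nat.one_le_iff_ne_zero.1 hj)]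
    _ ≤ prob ((latentPMF hn hj hjk).map (observe i j f)) (observe i j f '' U) := by
        rw [prob, probEvent_map]
        exact prob_mono _ fun y hy => Set.mem_image_of_mem _ hy
    _ = prob ((latentPMF hn hj hjk).map (observe i j f)) (observe i j f '' U)
          - prob ((latentPMF hn hj hjk).map (observe i' j (flipOutside A f)))
            (observe i j f '' U) := by
        rw [hflip, sub_zero]
    _ ≤ _ := prob_sub_le_tv _ _ _

lemma half_gap_le_tv_flipOutside {m : ℕ} (hm : 0 < m) (hj : 1 ≤ j) (hjk : j < k)
    (i i' : ℕ) (f : Fin (2 * m) → Bool) {A : Finset (Fin (2 * m))} (hA : A.card ≤ m) :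
    ((j : ℝ)⁻¹ - (k : ℝ)⁻¹) / 2
      ≤ tv ((latentPMF (Nat.mul_pos two_pos hm) hj hjk).map (observe i j f))
          ((latentPMF (Nat.mul_pos two_pos hm) hj hjk).map
            (observe i' j (flipOutside A f))) := by
  refine le_trans ?_ (card_compl_mul_le_tv_flipOutside (Nat.mul_pos two_pos hm) hj hjk i i' f A)
  have hjk' : (0 : ℝ) ≤ (j : ℝ)⁻¹ - (k : ℝ)⁻¹ :=
    sub_nonneg.2 (inv_anti₀ (by exact_mod_cast hj) (by exact_mod_cast hjk.le))
  have hcard : (m : ℝ) ≤ Aᶜ.card := by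
    rw [Finset.card_compl, Fintype.card_fin]
    exact_mod_cast (by omega : m ≤ 2 * m - A.card)
  have hm' : (m : ℝ) ≠ 0 := by exact_mod_cast hm.ne'
  calc ((j : ℝ)⁻¹ - (k : ℝ)⁻¹) / 2
      = m * (((j : ℝ)⁻¹ - (k : ℝ)⁻¹) * ((2 * m : ℕ) : ℝ)⁻¹) := by push_cast; field_simp
    _ ≤ _ := by gcongr

/-- The latent samples on which the forgery with budget `4 / k` cannot confuse the learner. -/
def exceptional (n k m : ℕ) : Set (Multiset (Latent n)) :=
  {s | 4 * (m * (k : ℝ≥0∞)⁻¹) ≤ s.count (some none)} ∪ {s | Multiset.card s ≠ m}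

lemma four_mul_probEvent_exceptional_le_one (hn : 0 < n) (hj : 1 ≤ j) (hjk : j < k) {m : ℕ}
    (hm : 0 < m) : 4 * probEvent (iid (latentPMF hn hj hjk) m) (exceptional n k m) ≤ 1 := by
  have hlabel : latentPMF hn hj hjk (some none) = (k : ℝ≥0∞)⁻¹ := rfl
  have h := mul_probEvent_mul_le_count_le_one (p := latentPMF hn hj hjk) (x := some none)
    (by simp [hlabel]) hm 4
  refine le_trans ?_ h
  gcongr
  refine probEvent_mono _ fun s hs => ?_
  rintro (h | h)
  · rwa [← hlabel] at h
  · exact (h (card_of_mem_support_iid hs)).elim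

lemma count_le_floor_of_notMem_exceptional (hk : k ≠ 0) {m : ℕ} {s : Multiset (Latent n)}
    (hs : s ∉ exceptional n k m) :
    s.count (some none) ≤ ⌊(4 / k : ℝ) * Multiset.card s⌋₊ := by
  obtain ⟨hcount, hcard⟩ := not_or.1 hs
  obtain rfl : Multiset.card s = m := not_not.1 hcard
  have hlt : (s.count (some none) : ℝ≥0∞).toReal < (4 * (Multiset.card s * (k : ℝ≥0∞)⁻¹)).toReal :=
    ENNReal.toReal_strict_mono (ENNReal.mul_ne_top (by simp)
      (ENNReal.mul_ne_top (ENNReal.natCast_ne_top _) (by simpa using hk))) (not_le.1 hcount)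
  refine Nat.le_floor (le_trans ?_ (hlt.le.trans_eq ?_))
  · rw [ENNReal.toReal_natCast]
  · simp
    ring

lemma lt_tv_corruptedSample_flipOutside {m : ℕ} (hm : 0 < m) (hj : 1 ≤ j) (hjk : j < k)
    {idx : (Fin (2 * m) → Bool) → ℕ} (hidx : Function.Injective idx)
    (A : Multiset (ℕ × ℕ) → PMF (ℕ × ℕ)) {b : ℝ} (hb : 2 * b < ((j : ℝ)⁻¹ - (k : ℝ)⁻¹) / 2)
    {s : Multiset (Latent (2 * m))} (hs : s ∉ exceptional (2 * m) k m) {f f' : Fin (2 * m) → Bool}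
    (hf' : f' = flipOutside (latentSeen s) f)
    (hf : tv (A (corruptedSample idx j (4 / k) f s))
      ((latentPMF (Nat.mul_pos two_pos hm) hj hjk).map (observe (idx f) j f)) ≤ b) :
    b < tv (A (corruptedSample idx j (4 / k) f' s))
      ((latentPMF (Nat.mul_pos two_pos hm) hj hjk).map (observe (idx f') j f')) := by
  subst hf'
  rw [corruptedSample_flipOutside hidx (count_le_floor_of_notMem_exceptional
    (Nat.ne_zero_of_lt hjk) hs)]
  have hcard : (latentSeen s).card ≤ m :=
    (card_latentSeen_le s).trans_eq (not_not.1 (not_or.1 hs).2)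
  have hgap := half_gap_le_tv_flipOutside hm hj hjk (idx f)
    (idx (flipOutside (latentSeen s) f)) f hcard
  rw [tv_comm] at hf
  linarith [hgap.trans (tv_triangle _ (A (corruptedSample idx j (4 / k) f s)) _)]

lemma exists_probEvent_tv_le_le (B : ℕ → Finset ℕ) (hB : Function.Surjective B) {g : ℕ → ℕ}
    (hj : 1 ≤ j) (hjk : j < g j) (A : Multiset (ℕ × ℕ) → PMF (ℕ × ℕ)) {m : ℕ} (hm : 0 < m) {b : ℝ}
    (hb : 2 * b < ((j : ℝ)⁻¹ - (g j : ℝ)⁻¹) / 2) :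
    ∃ V : Adversary (ℕ × ℕ), IsAdditive V ∧ FixedBudgetAdd V (4 / g j) ∧
      ∃ p ∈ Cg B g, 8 * probEvent ((iid p m).bind V) {T | tv (A T) p ≤ b} ≤ 5 := by
  have hn : 0 < 2 * m := Nat.mul_pos two_pos hm
  choose idx hBidx using fun f : Fin (2 * m) → Bool => hB (codeSet f)
  have hidx : Function.Injective idx := fun f f' h =>
    codeSet_injective ((hBidx f).symm.trans (h ▸ hBidx f'))
  let ν := latentPMF hn hj hjk
  let p f := ν.map (observe (idx f) j f)
  let E f := {s | tv (A (corruptedSample idx j (4 / g j) f s)) (p f) ≤ b}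
  obtain ⟨f, hf⟩ := exists_two_mul_probEvent_le (iid ν m) E (exceptional (2 * m) (g j) m)
    (fun s => flipOutside (latentSeen s)) fun s hs f hsf =>
      (lt_tv_corruptedSample_flipOutside hm hj hjk hidx A hb hs rfl hsf).not_ge
  let V := addAdversary (forgery idx j (4 / g j))
  have hV : (iid (p f) m).bind V = (iid ν m).map (corruptedSample idx j (4 / g j) f) := by
    rw [iid_map, PMF.bind_map]
    rfl
  refine ⟨V, isAdditive_addAdversary _,
    fixedBudgetAdd_addAdversary (by positivity) fun T => card_padTo _ _ _, p f,
    ⟨idx f, j, hj, hjk, ?_, isPijk_map_observe (hBidx f) hn hj hjk⟩, ?_⟩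
  · rwa [hBidx, ← Finset.card_pos, card_codeSet]
  · calc 8 * probEvent ((iid (p f) m).bind V) {T | tv (A T) (p f) ≤ b}
        = 4 * (2 * probEvent (iid ν m) (E f)) := by
          rw [hV, probEvent_map, ← mul_assoc]
          norm_num
          rfl
      _ ≤ 4 * (1 + probEvent (iid ν m) (exceptional (2 * m) (g j) m)) := by gcongr
      _ ≤ 4 + 1 := by
          rw [mul_add, mul_one]
          gcongr
          exact four_mul_probEvent_exceptional_le_one hn hj hjk hm
      _ = 5 := by norm_num

lemma Superlinear.exists_mul_le {g : ℕ → ℕ} (hg : Superlinear g) (c : ℝ) :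
    ∃ j, 1 ≤ j ∧ c * j ≤ g j := by
  obtain ⟨j, hcj, hj⟩ := ((hg.eventually_ge_atTop c).and (Filter.eventually_ge_atTop 1)).exists
  exact ⟨j, hj, (le_div_iff₀ (by exact_mod_cast hj)).1 hcj⟩

theorem not_additivelyRobustlyLearnable_Cg (B : ℕ → Finset ℕ) (hB : Function.Surjective B)
    {g : ℕ → ℕ} (hg : Superlinear g) (α : ℝ) : ¬ AdditivelyRobustlyLearnable (Cg B g) α := by
  rintro ⟨A, mc, hA⟩
  obtain ⟨j, hj, hgj⟩ := hg.exists_mul_le (32 * |α| + 5)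
  have hj' : (1 : ℝ) ≤ j := by exact_mod_cast hj
  have hgj' : 5 * (j : ℝ) ≤ g j := by nlinarith [abs_nonneg α]
  have hg0 : (0 : ℝ) < g j := by linarith
  have hjk : j < g j := by exact_mod_cast (by linarith : (j : ℝ) < g j)
  have hinv : (32 * |α| + 5) * (g j : ℝ)⁻¹ ≤ (j : ℝ)⁻¹ := by
    rwa [← div_eq_mul_inv, div_le_iff₀ hg0, inv_mul_eq_div, le_div_iff₀ (by linarith)]
  have hgap : 2 * (α * (4 / g j) + (j : ℝ)⁻¹ / 16) < ((j : ℝ)⁻¹ - (g j : ℝ)⁻¹) / 2 := by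
    have hα : α * (g j : ℝ)⁻¹ ≤ |α| * (g j : ℝ)⁻¹ := by gcongr; exact le_abs_self α
    have hgpos : 0 < (g j : ℝ)⁻¹ := inv_pos.2 hg0
    have hjpos : 0 < (j : ℝ)⁻¹ := inv_pos.2 (by linarith)
    rw [div_eq_mul_inv 4]
    linarith
  let m := max (mc ((j : ℝ)⁻¹ / 16) (1 / 4)) 1
  obtain ⟨V, hV, hVη, p, hp, hfail⟩ := exists_probEvent_tv_le_le B hB hj hjk A
    (lt_max_of_lt_right one_pos : 0 < m) hgap
  have hsuccess := hA V (4 / g j) (by positivity) ((div_lt_one hg0).2 (by linarith)) hV hVη p hp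
    ((j : ℝ)⁻¹ / 16) (1 / 4) (by positivity) (by linarith [inv_le_one_of_one_le₀ hj']) (by norm_num)
    (by norm_num) m (le_max_left _ _)
  have hle : 8 * (1 - ENNReal.ofReal (1 / 4)) ≤ 5 := (by gcongr : _ ≤ _).trans hfail
  have h68 : (8 : ℝ≥0∞) * (1 - ENNReal.ofReal (1 / 4)) = 6 := by
    rw [← ENNReal.ofReal_one, ← ENNReal.ofReal_sub 1 (by norm_num),
      ← ENNReal.ofReal_ofNat 8, ← ENNReal.ofReal_mul (by norm_num)]
    norm_num
  norm_num [h68] at hle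

end LowerBound

lemma superlinear_sq : Superlinear fun n => n ^ 2 := by
  refine (tendsto_natCast_atTop_atTop (R := ℝ)).congr fun n => ?_
  rcases eq_or_ne n 0 with rfl | hn
  · simp
  · rw [eq_div_iff (by exact_mod_cast hn)]
    push_cast
    ring

theorem stmt12_general (B : ℕ → Finset ℕ) (hB : Function.Surjective B) {g : ℕ → ℕ}
    (hg : Superlinear g) :
    ObliviouslyAdditivelyRobustlyLearnable (Cg B g) 2 ∧
      ∀ α : ℝ, ¬ AdditivelyRobustlyLearnable (Cg B g) α :=
  ⟨(hasPointCompression_Cg B g).obliviouslyAdditivelyRobustlyLearnable,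
    not_additivelyRobustlyLearnable_Cg B hB hg⟩

/-- There is a class (namely `C_g` for a suitable superlinear `g`) that is
obliviously additively 3-robustly learnable, yet for every `α ≥ 1` is not adaptively
additively α-robustly learnable. -/
theorem stmt12 (B : ℕ → Finset ℕ) (hB : Function.Surjective B) :
    ∃ g : ℕ → ℕ, Superlinear g ∧
      ObliviouslyAdditivelyRobustlyLearnable (Cg B g) 3 ∧
      ∀ α : ℝ, 1 ≤ α → ¬ AdditivelyRobustlyLearnable (Cg B g) α :=
  ⟨fun n => n ^ 2, superlinear_sq,
    (stmt12_general B hB superlinear_sq).1.mono (by norm_num),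
    fun α _ => (stmt12_general B hB superlinear_sq).2 α⟩
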